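/- Fix integers n ≥ 2 and t ≥ 0. The number of weak compositions j = (j_0, …, j_{n−1}) of binom(n,2) such that j dominates δ = (n−1, n−2, …, 1, 0) (i.e., ∑_{i=0}^{k} j_i ≥ ∑_{i=0}^{k} (n−1−i) for every 0 ≤ k ≤ n−1), j_0 ≤ t + n − 1, and j_i ≤ n − 1 − i for every 1 ≤ i ≤ n−1, equals the number of permutations of {1, …, n−1} having at most t inversions. In particular this number equals (n−1)! whenever t ≥ binom(n−1,2). -/

import Mathlib

/-- A weak composition `j = (j_0,…,j_{n−1})` of `C(n,2)` which dominates
`δ = (n−1,…,1,0)` and satisfies `j_0 ≤ t + n − 1` and `j_i ≤ n − 1 − i` for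
`1 ≤ i ≤ n−1`. -/
def GoodComp (n t : ℕ) (j : Fin n → ℕ) : Prop :=
  (∑ i, j i = Nat.choose n 2) ∧
  (∀ k : Fin n,
    (∑ i : Fin n, if i ≤ k then (n - 1 - (i : ℕ)) else 0) ≤
      ∑ i : Fin n, if i ≤ k then j i else 0) ∧
  (∀ i : Fin n, (i : ℕ) = 0 → j i ≤ t + n - 1) ∧
  (∀ i : Fin n, 1 ≤ (i : ℕ) → j i ≤ n - 1 - (i : ℕ))

/-!
Dominance over `δ` is automatic: `j` and `δ` have the same total, and `j i ≤ δ i` for `i ≥ 1`, so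
every proper tail of `j` sums to at most the same tail of `δ`. Hence `j` is determined by the
deficiencies `c = δ - j` in positions `1, …, n - 1`: the total forces `j 0 = (n - 1) + ∑ c`, so that
`j 0 ≤ t + n - 1` says `∑ c ≤ t`. The vectors `c` with `c i ≤ n - 2 - i` are exactly the Lehmer
codes of the permutations of `n - 1` points, and the entries of a Lehmer code add up to the
number of inversions.
-/

open Finset

open scoped Nat

theorem sum_filter_le_sum_filter_of_sum_eq {ι M : Type*} [AddCommMonoid M] [PartialOrder M]
    [IsOrderedCancelAddMonoid M] {s : Finset ι} {f g : ι → M} (p : ι → Prop) [DecidablePred p]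
    (hsum : ∑ i ∈ s, f i = ∑ i ∈ s, g i)
    (hle : ∀ i ∈ s, ¬ p i → g i ≤ f i) :
    ∑ i ∈ s with p i, f i ≤ ∑ i ∈ s with p i, g i := by
  have hcompl : ∑ i ∈ s with ¬ p i, g i ≤ ∑ i ∈ s with ¬ p i, f i :=
    sum_le_sum fun i hi ↦ hle i (mem_filter.1 hi).1 (mem_filter.1 hi).2
  refine le_of_add_le_add_right (a := ∑ i ∈ s with ¬ p i, g i) ?_
  calc ∑ i ∈ s with p i, f i + ∑ i ∈ s with ¬ p i, g i
      ≤ ∑ i ∈ s with p i, f i + ∑ i ∈ s with ¬ p i, f i := by gcongr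
    _ = ∑ i ∈ s with p i, g i + ∑ i ∈ s with ¬ p i, g i := by
      rw [sum_filter_add_sum_filter_not, sum_filter_add_sum_filter_not, hsum]

section Staircase

variable {α : Type*} [Preorder α] [LocallyFiniteOrderTop α]

/-- The staircase `δ`, whose entry at `i` is the number of elements above `i`; on `Fin n` it is
`(n - 1, …, 1, 0)`. It is defined on arbitrary orders because it also bounds Lehmer codes. -/
def staircase (i : α) : ℕ := #(Ioi i)

theorem staircase_fin {n : ℕ} (i : Fin n) : staircase i = n - 1 - i := Fin.card_Ioi i

theorem staircase_succ {m : ℕ} (i : Fin m) : staircase i.succ = staircase i := by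
  simp only [staircase_fin, Fin.val_succ]
  omega

theorem staircase_orderIso {β : Type*} [Preorder β] [LocallyFiniteOrderTop β] (e : α ≃o β)
    (i : α) : staircase (e i) = staircase i := by
  refine (card_equiv e.toEquiv fun k ↦ ?_).symm
  simp

end Staircase

section StaircaseSums

variable (α : Type*) [LinearOrder α] [Fintype α] [LocallyFiniteOrderTop α]

@[to_additive]
theorem prod_comp_staircase {M : Type*} [CommMonoid M] (F : ℕ → M) :
    ∏ i : α, F (staircase i) = ∏ k ∈ range (Fintype.card α), F k := by
  have e : α ≃o Fin (Fintype.card α) := (Fintype.orderIsoFinOfCardEq α rfl).symm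
  have staircase_eq_rev (i : α) : staircase i = (e i).rev := by
    rw [← staircase_orderIso e, staircase_fin, Fin.val_rev, Nat.sub_sub, add_comm]
  calc ∏ i : α, F (staircase i) = ∏ k : Fin (Fintype.card α), F k :=
        Fintype.prod_equiv (e.toEquiv.trans Fin.revPerm) _ _ fun i ↦
          congrArg F (staircase_eq_rev i)
    _ = ∏ k ∈ range (Fintype.card α), F k := Fin.prod_univ_eq_prod_range F _

theorem sum_staircase : ∑ i : α, staircase i = (Fintype.card α).choose 2 := by
  rw [sum_comp_staircase α fun k ↦ k, sum_range_id, Nat.choose_two_right]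

theorem card_Iic_staircase : #(Iic (staircase : α → ℕ)) = (Fintype.card α)! := by
  simp only [Pi.card_Iic, Nat.card_Iic]
  rw [prod_comp_staircase α fun k ↦ k + 1, prod_range_add_one_eq_factorial]

end StaircaseSums

section LehmerCode

variable {α β : Type*} [LinearOrder α] [LinearOrder β]

/-- The inversions of `f`, recorded as pairs of positions. -/
def inversions [Fintype α] (f : α → β) : Finset (α × α) := {p | p.1 < p.2 ∧ f p.2 < f p.1}

variable [LocallyFiniteOrderTop α]

/-- The Lehmer code of `f`: its entry at `i` counts the inversions of `f` whose left end is `i`. -/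
def lehmerCode (f : α → β) (i : α) : ℕ := #{k ∈ Ioi i | f k < f i}

theorem lehmerCode_le_staircase (f : α → β) : lehmerCode f ≤ staircase :=
  fun _ ↦ card_filter_le _ _

theorem lehmerCode_lt_of_lt {e e' : α ≃ β} {i : α} (hagree : ∀ k < i, e k = e' k)
    (hlt : e i < e' i) : lehmerCode e i < lehmerCode e' i := by
  -- Compare the values at the inverted positions, since positions alone are not nested.
  rw [lehmerCode, lehmerCode, ← card_map e.toEmbedding, ← card_map e'.toEmbedding]
  have le_symm_of_le_symm {b : β} (hb : i ≤ e.symm b) : i ≤ e'.symm b := by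
    by_contra! hb'
    have : e.symm b = e'.symm b := by
      rw [Equiv.symm_apply_eq, hagree _ hb', Equiv.apply_symm_apply]
    exact (this ▸ hb).not_gt hb'
  have lt_symm_of_lt {b : β} (hb : i ≤ e.symm b) (hbi : b < e' i) : i < e'.symm b :=
    (le_symm_of_le_symm hb).lt_of_ne fun h ↦ hbi.ne ((Equiv.eq_symm_apply e').1 h).symm
  refine card_lt_card ((ssubset_iff_of_subset fun b hb ↦ ?_).2 ⟨e i, ?_, ?_⟩)
  · simp only [mem_map_equiv, mem_filter, mem_Ioi, Equiv.apply_symm_apply] at hb ⊢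
    exact ⟨lt_symm_of_lt hb.1.le (hb.2.trans hlt), hb.2.trans hlt⟩
  · simp only [mem_map_equiv, mem_filter, mem_Ioi, Equiv.apply_symm_apply]
    exact ⟨lt_symm_of_lt (e.symm_apply_apply i).ge hlt, hlt⟩
  · simp

theorem lehmerCode_injective [Finite α] : Function.Injective fun e : α ≃ β ↦ lehmerCode e := by
  intro e e' hcode
  ext i
  induction i using WellFoundedLT.induction with
  | ind i ih =>
    rcases lt_trichotomy (e i) (e' i) with hlt | heq | hgt
    · exact absurd (congrFun hcode i) (lehmerCode_lt_of_lt ih hlt).ne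
    · exact heq
    · exact absurd (congrFun hcode i) (lehmerCode_lt_of_lt (fun k hk ↦ (ih k hk).symm) hgt).ne'

theorem bijOn_lehmerCode [Finite α] :
    Set.BijOn (fun w : Equiv.Perm α ↦ lehmerCode w) Set.univ (Set.Iic staircase) := by
  have := Fintype.ofFinite α
  have hmaps : Set.MapsTo (fun w : Equiv.Perm α ↦ lehmerCode w) Set.univ (Set.Iic staircase) :=
    fun w _ ↦ lehmerCode_le_staircase w
  refine ⟨hmaps, lehmerCode_injective.injOn, ?_⟩
  have hcard : #(Iic (staircase : α → ℕ)) ≤ #(univ : Finset (Equiv.Perm α)) := by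
    rw [card_Iic_staircase, card_univ, Fintype.card_perm]
  simpa using surjOn_of_injOn_of_card_le (fun w : Equiv.Perm α ↦ lehmerCode w)
    (by simpa using hmaps) lehmerCode_injective.injOn hcard

variable [Fintype α]

theorem sum_lehmerCode (f : α → β) : ∑ i, lehmerCode f i = #(inversions f) := by
  simp only [lehmerCode, inversions, card_filter, Fintype.sum_prod_type, ← filter_lt_eq_Ioi,
    sum_filter, ite_and]

theorem card_inversions_le (f : α → β) : #(inversions f) ≤ (Fintype.card α).choose 2 := by
  rw [← sum_lehmerCode, ← sum_staircase α]
  exact sum_le_sum fun i _ ↦ lehmerCode_le_staircase f i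

theorem bijOn_lehmerCode_card_inversions_le (t : ℕ) :
    Set.BijOn (fun w : Equiv.Perm α ↦ lehmerCode w) {w | #(inversions w) ≤ t}
      {c | c ≤ staircase ∧ ∑ i, c i ≤ t} := by
  convert bijOn_lehmerCode.subset_right (r := {c : α → ℕ | c ≤ staircase ∧ ∑ i, c i ≤ t})
    fun _ hc ↦ hc.1 using 1
  ext w
  simp [lehmerCode_le_staircase, sum_lehmerCode]

end LehmerCode

section GoodComp

theorem goodComp_iff_sum_eq_and_le {n t : ℕ} {j : Fin n → ℕ} :
    GoodComp n t j ↔ ∑ i, j i = n.choose 2 ∧ (∀ i : Fin n, (i : ℕ) = 0 → j i ≤ t + n - 1) ∧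
      ∀ i : Fin n, 1 ≤ (i : ℕ) → j i ≤ staircase i := by
  simp only [GoodComp, ← staircase_fin, ← sum_filter]
  refine ⟨fun ⟨hsum, _, hzero, htail⟩ ↦ ⟨hsum, hzero, htail⟩,
    fun ⟨hsum, hzero, htail⟩ ↦ ⟨hsum, fun k ↦ ?_, hzero, htail⟩⟩
  refine sum_filter_le_sum_filter_of_sum_eq (· ≤ k) ?_ fun i _ hi ↦ htail i ?_
  · rw [hsum, sum_staircase, Fintype.card_fin]
  · exact Nat.one_le_iff_ne_zero.2 (Nat.ne_zero_of_lt (not_le.1 hi))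

variable {m t : ℕ}

theorem goodComp_succ_iff {j : Fin (m + 1) → ℕ} :
    GoodComp (m + 1) t j ↔ Fin.tail j ≤ staircase ∧
      j 0 = m + ∑ i : Fin m, (staircase i - Fin.tail j i) ∧
      ∑ i : Fin m, (staircase i - Fin.tail j i) ≤ t := by
  have hchoose : (m + 1).choose 2 = m + ∑ i : Fin m, staircase i := by
    rw [Nat.choose_succ_succ' m 1, Nat.choose_one_right, sum_staircase, Fintype.card_fin]
  have hzero : (∀ i : Fin (m + 1), (i : ℕ) = 0 → j i ≤ t + (m + 1) - 1) ↔ j 0 ≤ t + m := by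
    simp
  have htail : (∀ i : Fin (m + 1), 1 ≤ (i : ℕ) → j i ≤ staircase i) ↔ Fin.tail j ≤ staircase := by
    simp [Fin.forall_fin_succ, staircase_succ, Pi.le_def, Fin.tail]
  rw [goodComp_iff_sum_eq_and_le, hzero, htail, hchoose, Fin.sum_univ_succ, ← and_assoc, and_comm]
  refine and_congr_right fun hle ↦ ?_
  have hsum : ∑ i, (staircase i - Fin.tail j i) + ∑ i : Fin m, j i.succ =
      ∑ i : Fin m, staircase i := by
    rw [← sum_add_distrib]
    exact sum_congr rfl fun i _ ↦ tsub_add_cancel_of_le (hle i)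
  omega

theorem bijOn_staircase_sub_tail :
    Set.BijOn (fun j : Fin (m + 1) → ℕ ↦ staircase - Fin.tail j) {j | GoodComp (m + 1) t j}
      {c | c ≤ staircase ∧ ∑ i, c i ≤ t} := by
  refine Set.InvOn.bijOn
    (f' := fun c ↦ Fin.cons (m + ∑ i, c i) (staircase - c : Fin m → ℕ)) ⟨?_, ?_⟩ ?_ ?_
  · intro j hj
    obtain ⟨htail, hzero, -⟩ := goodComp_succ_iff.1 hj
    simp only [tsub_tsub_cancel_of_le htail, Pi.sub_apply, ← hzero, Fin.cons_self_tail]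
  · rintro c ⟨hc, -⟩
    simp only [Fin.tail_cons, tsub_tsub_cancel_of_le hc]
  · intro j hj
    exact ⟨tsub_le_self, (goodComp_succ_iff.1 hj).2.2⟩
  · rintro c ⟨hc, ht⟩
    have hcancel (i : Fin m) : staircase i - (staircase i - c i) = c i :=
      tsub_tsub_cancel_of_le (hc i)
    simp [goodComp_succ_iff, hcancel, ht]

end GoodComp

/-- **Proposition.** For `n ≥ 2` and `t ≥ 0`, the number of weak compositions
`j` of `C(n,2)` dominating `δ = (n−1,…,1,0)` with `j_0 ≤ t+n−1` and
`j_i ≤ n−1−i` for `1 ≤ i ≤ n−1` equals the number of permutations of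
`{1,…,n−1}` with at most `t` inversions; in particular, it equals `(n−1)!`
whenever `t ≥ C(n−1,2)`. -/
theorem card_goodComp_eq_card_perms_le_inversions (n t : ℕ) (hn : 2 ≤ n) :
    Nat.card {j : Fin n → ℕ // GoodComp n t j} =
      Nat.card {w : Equiv.Perm (Fin (n - 1)) //
        (Finset.univ.filter fun p : Fin (n - 1) × Fin (n - 1) =>
          p.1 < p.2 ∧ w p.2 < w p.1).card ≤ t} ∧
    (Nat.choose (n - 1) 2 ≤ t →
      Nat.card {j : Fin n → ℕ // GoodComp n t j} = Nat.factorial (n - 1)) := by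
  obtain ⟨m, rfl⟩ : ∃ m, n = m + 1 := ⟨n - 1, by omega⟩
  have hcard : Nat.card {j : Fin (m + 1) → ℕ // GoodComp (m + 1) t j} =
      Nat.card {w : Equiv.Perm (Fin m) // #(inversions w) ≤ t} :=
    Nat.card_congr <| bijOn_staircase_sub_tail.equiv.trans
      (bijOn_lehmerCode_card_inversions_le t).equiv.symm
  refine ⟨hcard, fun ht ↦ hcard.trans ?_⟩
  have hall (w : Equiv.Perm (Fin m)) : #(inversions w) ≤ t :=
    (card_inversions_le w).trans (by simpa using ht)
  rw [Nat.card_congr (Equiv.subtypeUnivEquiv hall), Nat.card_perm, Nat.card_fin, Nat.add_sub_cancel]
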